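/- Each of Ψ₂ and Ψ₃ maps ℤ_(3)⁸ into itself, and Ψ₂ maps the submodule Ψ₃(ℤ_(3)⁸) into itself. The kernel of the endomorphism of ℤ_(3)⁸/Ψ₃(ℤ_(3)⁸) induced by Ψ₂ - 2³·id is isomorphic to ℤ/3⁶. -/

import Mathlib

/-!
Write `L = ℤ_(3)⁸`, `B = Ψ₃`, `C = Ψ₂ - 8`. The matrices of `Ψ₂` and `Ψ₃` are integral and commute,
which gives the three stability claims, and `B`, `C` are lower triangular and invertible over `ℚ`.

An element of the kernel is the class of some `v ∈ L` with `C v = B u`, `u ∈ L`. For `x = B⁻¹ v`,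
commutativity gives `C x = u`, so the kernel is `B M / B L ≅ M / L`, where
`M = {x ∈ ℚ⁸ | B x ∈ L, C x ∈ L}`. A row reduction over `ℤ_(3)` of `B` stacked on `C` computes `M`:
it is `L + ℤ_(3) · e / 3⁶` for the integral vector `e = vecE`, whose last coordinate is `1`
(`mem_of_act_mem`, `mat3_vecE`, `matC_vecE`). Hence the kernel is cyclic of order `3⁶`, generated by
the class of `vecG = B e / 3⁶`.

The row reduction is recorded as a congruence modulo `3⁸` (`coef_congr`). This is enough because
`det C` is `3⁸` times a unit of `ℤ_(3)`, so that `C x ∈ L` already forces `3⁸ x ∈ L`.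
-/

set_option synthInstance.maxHeartbeats 1000000
set_option maxHeartbeats 1000000

noncomputable section

instance : Fact (Nat.Prime 3) := ⟨by norm_num⟩

/-- The `p`-adic valuation of an integer, valued in `ℕ∞`, with `ν_p 0 = ⊤`. -/
def nuE (p : ℕ) (x : ℤ) : ℕ∞ :=
  if x = 0 then ⊤ else (padicValInt p x : ℕ∞)

/-- The localization `ℤ_(p)` of the integers at the prime `p`, realized as the subring
of `ℚ` consisting of fractions whose denominator is prime to `p`. -/
def ZLoc (p : ℕ) [hp : Fact p.Prime] : Subring ℚ where
  carrier := {q : ℚ | ¬ (p : ℕ) ∣ q.den}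
  zero_mem' := by simp [Rat.den_zero, Nat.dvd_one, hp.out.ne_one]
  one_mem' := by simp [Rat.den_one, Nat.dvd_one, hp.out.ne_one]
  add_mem' := by
    intro a b ha hb hd
    rcases (Nat.Prime.dvd_mul hp.out).mp (hd.trans (Rat.add_den_dvd a b)) with h | h
    · exact ha h
    · exact hb h
  mul_mem' := by
    intro a b ha hb hd
    rcases (Nat.Prime.dvd_mul hp.out).mp (hd.trans (Rat.mul_den_dvd a b)) with h | h
    · exact ha h
    · exact hb h
  neg_mem' := by
    intro a ha hd
    rw [Rat.neg_den] at hd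
    exact ha hd

/-- The columns of the Adams operation `Ψ_t` on the ordered basis
`(w₁, w₇, w₁₁, w₁₃, w₁₇, w₁₉, w₂₃, w₂₉)` of `PK¹(E₈; ℤ_(3))`: the `j`-th entry of
`psiCols t` is the coordinate vector of `Ψ_t(w_j)`. -/
def psiCols (t : ℚ) : Fin 8 → Fin 8 → ℚ :=
  ![![t,
     -(730/3) * (t - t^7),
     (6560/3)*t - 2190*t^7 + (10/3)*t^11,
     918*t - (24820/27)*t^7 + (10/9)*t^11 + (4/27)*t^13,
     (1484/3)*t - (40150/81)*t^7 + (50/81)*t^11 + (4/81)*t^13 + (28/81)*t^17,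
     (121/3)*t - (29200/729)*t^7 + (10/243)*t^11 - (40/729)*t^13 - (28/243)*t^17
       - (109/729)*t^19,
     -(998/3)*t + (727810/2187)*t^7 - (1030/2187)*t^11 - (104/2187)*t^13
       - (280/2187)*t^17 - (218/2187)*t^19 + (1364/2187)*t^23,
     (8479/9)*t - (6187480/6561)*t^7 + (99320/59049)*t^11 - (316/6561)*t^13
       + (364/19683)*t^17 - (109/6561)*t^19 + (1364/19683)*t^23 - (44078/59049)*t^29],
    ![0, t^7,
     -(9 * (t^7 - t^11)),
     -(34/9)*t^7 + 3*t^11 + (7/9)*t^13,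
     -(55/27)*t^7 + (5/3)*t^11 + (7/27)*t^13 + (1/9)*t^17,
     -(40/243)*t^7 + (1/9)*t^11 - (70/243)*t^13 - (1/27)*t^17 + (92/243)*t^19,
     (997/729)*t^7 - (103/81)*t^11 - (182/729)*t^13 - (10/243)*t^17 + (184/729)*t^19
       - (14/243)*t^23,
     -(8476/2187)*t^7 + (9932/2187)*t^11 - (553/2187)*t^13 + (13/2187)*t^17
       + (92/2187)*t^19 - (14/2187)*t^23 - (994/2187)*t^29],
    ![0, 0, t^11,
     (1/3) * (t^11 - t^13),
     (5/27)*t^11 - (1/9)*t^13 - (2/27)*t^17,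
     (1/81)*t^11 + (10/81)*t^13 + (2/81)*t^17 - (13/81)*t^19,
     -(103/729)*t^11 + (26/243)*t^13 + (20/729)*t^17 - (26/243)*t^19 + (83/729)*t^23,
     (9932/19683)*t^11 + (79/729)*t^13 - (26/6561)*t^17 - (13/729)*t^19
       + (83/6561)*t^23 - (11885/19683)*t^29],
    ![0, 0, 0, t^13,
     (1/3) * (t^13 - t^17),
     -(10/27)*t^13 + (1/9)*t^17 + (7/27)*t^19,
     -(26/81)*t^13 + (10/81)*t^17 + (14/81)*t^19 + (2/81)*t^23,
     -(79/243)*t^13 - (13/729)*t^17 + (7/243)*t^19 + (2/729)*t^23 + (227/729)*t^29],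
    ![0, 0, 0, 0, t^17,
     -((1/3) * (t^17 - t^19)),
     -(10/27)*t^17 + (2/9)*t^19 + (4/27)*t^23,
     (13/243)*t^17 + (1/27)*t^19 + (4/243)*t^23 - (26/243)*t^29],
    ![0, 0, 0, 0, 0, t^19,
     (2/3) * (t^19 - t^23),
     (1/9)*t^19 - (2/27)*t^23 - (1/27)*t^29],
    ![0, 0, 0, 0, 0, 0, t^23,
     (1/9) * (t^23 - t^29)],
    ![0, 0, 0, 0, 0, 0, 0, t^29]]

/-- The Adams operation `Ψ_t` as a `ℚ`-linear endomorphism of `ℚ⁸`: the standard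
basis vector `w_j` is sent to the `j`-th column `psiCols t j`. -/
def psiLin (t : ℚ) : (Fin 8 → ℚ) →ₗ[ℚ] (Fin 8 → ℚ) :=
  Matrix.mulVecLin (Matrix.of (psiCols t)).transpose

/-- The lattice `ℤ_(3)⁸ ⊆ ℚ⁸`, the free `ℤ_(3)`-module on the standard basis. -/
def latt8 : Submodule (ZLoc 3) (Fin 8 → ℚ) :=
  Submodule.span (ZLoc 3) (Set.range fun j : Fin 8 => Pi.single j (1 : ℚ))

/-- The image `Ψ₃(ℤ_(3)⁸)` of the lattice under the Adams operation `ψ³`. -/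
def im3 : Submodule (ZLoc 3) (Fin 8 → ℚ) :=
  latt8.map ((psiLin 3).restrictScalars (ZLoc 3))

/-! ### Membership in `ℤ_(3)` and in the lattice -/

lemma div_mem_ZLoc (m : ℤ) {d : ℤ} (hd : ¬ (3 : ℤ) ∣ d) : (m / d : ℚ) ∈ ZLoc 3 := by
  change ¬ 3 ∣ (m / d : ℚ).den
  intro h
  exact hd ((Int.natCast_dvd_natCast.mpr h).trans (by
    simpa [Rat.divInt_eq_div] using Rat.den_dvd m d))

lemma int_mem_ZLoc (m : ℤ) : (m : ℚ) ∈ ZLoc 3 := intCast_mem _ m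

lemma mem_of_unit_mul_mem {u : ℤ} (hu : ¬ (3 : ℤ) ∣ u) {x : ℚ} (h : (u : ℚ) * x ∈ ZLoc 3) :
    x ∈ ZLoc 3 := by
  have hu0 : (u : ℚ) ≠ 0 := by
    rintro h0
    exact hu (by simp [Int.cast_eq_zero.mp h0])
  have := (ZLoc 3).mul_mem (div_mem_ZLoc 1 hu) h
  rwa [Int.cast_one, ← mul_assoc, one_div, inv_mul_cancel₀ hu0, one_mul] at this

lemma isCoprime_den {c : ℚ} (hc : c ∈ ZLoc 3) : IsCoprime (729 : ℤ) c.den := by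
  have h3 : Nat.Coprime 3 c.den := (Nat.Prime.coprime_iff_not_dvd (by norm_num)).mpr hc
  have := (Nat.Coprime.pow_left 6 h3)
  exact Nat.isCoprime_iff_coprime.mpr (by simpa using this)

/-- Every element of `ℤ_(3)` is congruent to an integer modulo `3⁶`. -/
lemma exists_int_congr {c : ℚ} (hc : c ∈ ZLoc 3) : ∃ n : ℤ, (c - n) / 729 ∈ ZLoc 3 := by
  obtain ⟨a, b, hab⟩ := isCoprime_den hc
  refine ⟨b * c.num, ?_⟩
  have hden : ¬ (3 : ℤ) ∣ (c.den : ℤ) := fun h => hc (Int.natCast_dvd_natCast.mp h)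
  have h0 : (c.den : ℚ) ≠ 0 := by exact_mod_cast c.den_nz
  convert div_mem_ZLoc (a * c.num) hden using 1
  have hab' : (a : ℚ) * 729 + b * c.den = 1 := by exact_mod_cast hab
  have hc' : c * c.den = c.num := Rat.mul_den_eq_num c
  push_cast
  rw [← hc']
  field_simp
  linear_combination (-c) * hab'

lemma dvd_of_div_mem {n : ℤ} (h : (n / 729 : ℚ) ∈ ZLoc 3) : (729 : ℤ) ∣ n := by
  have hq : ((n / 729 : ℚ).num : ℚ) * 729 = n * (n / 729 : ℚ).den := by
    rw [← Rat.mul_den_eq_num (n / 729 : ℚ)]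
    ring
  have hz : (n / 729 : ℚ).num * 729 = n * (n / 729 : ℚ).den := by exact_mod_cast hq
  exact (isCoprime_den h).dvd_of_dvd_mul_right ⟨_, hz.symm.trans (mul_comm _ _)⟩

lemma mem_latt8 {x : Fin 8 → ℚ} : x ∈ latt8 ↔ ∀ i, x i ∈ ZLoc 3 := by
  constructor
  · intro hx i
    refine Submodule.span_induction (p := fun y _ => y i ∈ ZLoc 3) ?_ ?_ ?_ ?_ hx
    · rintro _ ⟨j, rfl⟩
      by_cases h : i = j
      · subst h
        simp
      · simp [h]
    · exact (ZLoc 3).zero_mem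
    · intro a b _ _ ha hb
      exact (ZLoc 3).add_mem ha hb
    · intro r a _ ha
      exact (ZLoc 3).mul_mem r.2 ha
  · intro h
    rw [pi_eq_sum_univ' x]
    refine Submodule.sum_mem _ fun i _ => ?_
    have : (⟨x i, h i⟩ : ZLoc 3) • (Pi.single i (1 : ℚ) : Fin 8 → ℚ) ∈ latt8 :=
      Submodule.smul_mem _ _ (Submodule.subset_span ⟨i, rfl⟩)
    exact this

/-! ### The action of integral matrices -/

/-- The action of an integral matrix on `ℚ⁸`. -/
def act (M : Matrix (Fin 8) (Fin 8) ℤ) (x : Fin 8 → ℚ) : Fin 8 → ℚ :=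
  (M.map (Int.castRingHom ℚ)).mulVec x

lemma act_apply (M : Matrix (Fin 8) (Fin 8) ℤ) (x : Fin 8 → ℚ) (i : Fin 8) :
    act M x i = ∑ j, (M i j : ℚ) * x j := rfl

lemma act_mem {x : Fin 8 → ℚ} (M : Matrix (Fin 8) (Fin 8) ℤ) (hx : x ∈ latt8) :
    act M x ∈ latt8 :=
  mem_latt8.mpr fun _ => sum_mem fun j _ =>
    (ZLoc 3).mul_mem (int_mem_ZLoc _) (mem_latt8.mp hx j)

lemma act_act (M N : Matrix (Fin 8) (Fin 8) ℤ) (x : Fin 8 → ℚ) :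
    act M (act N x) = act (M * N) x := by
  simp only [act, Matrix.mulVec_mulVec, Matrix.map_mul]

lemma act_add (M N : Matrix (Fin 8) (Fin 8) ℤ) (x : Fin 8 → ℚ) :
    act (M + N) x = act M x + act N x := by
  simp only [act, ← Matrix.add_mulVec]
  congr 1
  ext i j
  simp

lemma act_smul (M : Matrix (Fin 8) (Fin 8) ℤ) (c : ℤ) (x : Fin 8 → ℚ) :
    act (c • M) x = (c : ℚ) • act M x := by
  ext i
  simp only [act_apply, Pi.smul_apply, Matrix.smul_apply, smul_eq_mul, Finset.mul_sum]
  refine Finset.sum_congr rfl fun j _ => ?_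
  push_cast
  ring

lemma act_one (x : Fin 8 → ℚ) : act 1 x = x := by simp [act]

/-- The inclusion `ℤ⁸ ⊆ ℚ⁸`. -/
def toQ (x : Fin 8 → ℤ) : Fin 8 → ℚ := fun i => x i

lemma toQ_mem (x : Fin 8 → ℤ) : toQ x ∈ latt8 := mem_latt8.mpr fun i => int_mem_ZLoc (x i)

lemma act_toQ (M : Matrix (Fin 8) (Fin 8) ℤ) (x : Fin 8 → ℤ) :
    act M (toQ x) = toQ (M.mulVec x) := by
  ext i
  simp [act_apply, toQ, Matrix.mulVec, dotProduct]

/-- By Cramer's rule, `M x` controls `det M • x`. -/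
lemma det_smul_mem {M : Matrix (Fin 8) (Fin 8) ℤ} {x : Fin 8 → ℚ} (h : act M x ∈ latt8) :
    (M.det : ℚ) • x ∈ latt8 := by
  have := act_mem M.adjugate h
  rwa [act_act, Matrix.adjugate_mul, act_smul, act_one] at this

/-! ### The matrices of the Adams operations -/

/-- The matrix of `Ψ₂`; its entries turn out to be integers. -/
def mat2 : Matrix (Fin 8) (Fin 8) ℤ :=
  !![2, 0, 0, 0, 0, 0, 0, 0;
     30660, 128, 0, 0, 0, 0, 0, 0;
     -269120, 17280, 2048, 0, 0, 0, 0, 0;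
     -112340, 12032, -2048, 8192, 0, 0, 0, 0;
     -15480, 19840, -10240, -40960, 131072, 0, 0, 0;
     -98906, 191488, -79872, 147456, 131072, 524288, 0, 0;
     5203388, -360832, 903168, 311296, 1310720, -5242880, 8388608, 0;
     -400295986, -244034048, -324075520, 167206912, -57278464, -20447232, -58720256, 536870912]

/-- The matrix of `Ψ₃`; its entries turn out to be integers. -/
def mat3 : Matrix (Fin 8) (Fin 8) ℤ :=
  !![3, 0, 0, 0, 0, 0, 0, 0;
     531440, 2187, 0, 0, 0, 0, 0, 0;
     -4192480, 1574640, 177147, 0, 0, 0, 0, 0;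
     -1574640, 1763208, -472392, 1594323, 0, 0, 0, 0;
     43746560, 15053040, -9710280, -42515280, 129140163, 0, 0, 0;
     -188829224, 434810232, -183148128, 315085464, 344373768, 1162261467, 0, 0;
     58583907152, -5136466128, 10597964832, 2540839104, 14157588240, -61987278240, 94143178827, 0;
     -51223655732024, -31193325852352, -41439262622400, 21370790533608, -7341568311096, -2548710256968, -7615137131784, 68630377364883]

/-- The matrix of `Ψ₂ - 2³`. -/
def matC : Matrix (Fin 8) (Fin 8) ℤ := mat2 - (8 : ℤ) • 1

/-- Coefficients of `Ψ₂ - 8` in the congruence `coef_congr`, obtained by row reduction over `ℤ_(3)` of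
the stacked matrices of `Ψ₂ - 8` and `Ψ₃`, and reduced modulo `3⁸`. -/
def coefC : Matrix (Fin 8) (Fin 8) ℤ :=
  !![0, 0, 0, 0, 0, 0, 0, 0;
     0, 0, -2769, -2187, 0, 0, 0, 0;
     0, 0, 873, -395, 1758, 3177, -54, 567;
     0, 0, -656, -139, 2030, 138, 72, -756;
     0, 0, 1560, -1290, 1272, -46, -2211, -1935;
     0, 0, 442, 838, -3008, -1048, 1438, -2706;
     0, 0, -3178, 428, 2497, 3260, 1548, -1799;
     0, 0, -961, 1185, 1287, -2970, 162, -1701]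

/-- Coefficients of `Ψ₃` in the congruence `coef_congr`. -/
def coefB : Matrix (Fin 8) (Fin 8) ℤ :=
  !![0, -2188, 0, 0, 0, 0, 0, -2187;
     0, -2716, 0, 0, 0, 0, 0, 581;
     0, -2097, 0, 0, 0, 0, 0, 2141;
     0, 2124, 0, 0, 0, 0, 0, -2853;
     0, 2242, 0, 0, 0, 0, 0, -166;
     0, 688, 0, 0, 0, 0, 0, 2878;
     0, 2728, 0, 0, 0, 0, 0, 500;
     0, -2146, 0, 0, 0, 0, 0, 1326]

/-- The reduced form of the pair `(Ψ₂ - 8, Ψ₃)` over `ℤ_(3)`: all its elementary divisors are `1`, except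
for a single `3⁶`. -/
def redN : Matrix (Fin 8) (Fin 8) ℤ :=
  !![1, 0, 0, 0, 0, 0, 0, 0;
     0, 1, 0, 0, 0, 0, 0, 0;
     0, 0, 1, 0, 0, 0, 0, -243;
     0, 0, 0, 1, 0, 0, 0, 324;
     0, 0, 0, 0, 1, 0, 0, -108;
     0, 0, 0, 0, 0, 1, 0, -90;
     0, 0, 0, 0, 0, 0, 1, 42;
     0, 0, 0, 0, 0, 0, 0, 729]

/-- A vector that both `Ψ₃` and `Ψ₂ - 8` send into `3⁶ℤ⁸`. -/
def vecE : Fin 8 → ℤ :=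
  ![0, 0, 243, -324, 108, 90, -42, 1]

/-- The vector `Ψ₃(e)/3⁶` with `e = vecE`; its class generates the kernel. -/
def vecG : Fin 8 → ℤ :=
  ![0, 0, 59049, -866052, 34790796, -6579954, -8575823646, -24180636644661]

/-- The vector `(Ψ₂ - 8)(e)/3⁶` with `e = vecE`. -/
def vecH : Fin 8 → ℤ :=
  ![0, 0, 680, -4320, 34208, -8016, -773680, -189229896]

lemma psiLin_two (x : Fin 8 → ℚ) : psiLin 2 x = act mat2 x := by
  have : (Matrix.of (psiCols 2)).transpose = mat2.map (Int.castRingHom ℚ) := by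
    ext i j
    fin_cases i <;> fin_cases j <;> norm_num [psiCols, mat2]
  simp [psiLin, act, this]

lemma psiLin_three (x : Fin 8 → ℚ) : psiLin 3 x = act mat3 x := by
  have : (Matrix.of (psiCols 3)).transpose = mat3.map (Int.castRingHom ℚ) := by
    ext i j
    fin_cases i <;> fin_cases j <;> norm_num [psiCols, mat3]
  simp [psiLin, act, this]

lemma psi_sub_eight (x : Fin 8 → ℚ) : psiLin 2 x - (2 : ℚ) ^ 3 • x = act matC x := by
  have h : mat2 = matC + (8 : ℤ) • 1 := by simp [matC]
  rw [psiLin_two, h, act_add, act_smul, act_one]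
  norm_num

lemma mat_comm : mat2 * mat3 = mat3 * mat2 := by decide +kernel

lemma matC_comm : matC * mat3 = mat3 * matC := by
  rw [matC, sub_mul, mul_sub, mat_comm, smul_one_mul, mul_smul_one]

lemma act_matC_mat3 (x : Fin 8 → ℚ) : act matC (act mat3 x) = act mat3 (act matC x) := by
  rw [act_act, act_act, matC_comm]

lemma det_mat3_ne_zero : mat3.det ≠ 0 := by
  have h : ∀ i j : Fin 8, i < j → mat3 i j = 0 := by
    intro i
    fin_cases i <;> decide +kernel
  rw [Matrix.det_of_isLowerTriangular mat3 fun i j hij => h i j hij]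
  decide +kernel

lemma det_matC : matC.det = 6561 * (-566975522208854297968286105600000) := by
  have h : ∀ i j : Fin 8, i < j → matC i j = 0 := by
    intro i
    fin_cases i <;> decide +kernel
  rw [Matrix.det_of_isLowerTriangular matC fun i j hij => h i j hij]
  decide +kernel

lemma act_mat3_injective : Function.Injective (act mat3) := by
  intro x y hxy
  have h := congrArg (act mat3.adjugate) hxy
  simp only [act_act, Matrix.adjugate_mul, act_smul, act_one] at h
  exact smul_right_injective _ (Int.cast_ne_zero.mpr det_mat3_ne_zero) h

lemma act_mat3_surjective : Function.Surjective (act mat3) := by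
  intro v
  refine ⟨(mat3.det : ℚ)⁻¹ • act mat3.adjugate v, ?_⟩
  have h : act mat3 (act mat3.adjugate v) = (mat3.det : ℚ) • v := by
    rw [act_act, Matrix.mul_adjugate, act_smul, act_one]
  rw [show act mat3 ((mat3.det : ℚ)⁻¹ • act mat3.adjugate v)
    = (mat3.det : ℚ)⁻¹ • act mat3 (act mat3.adjugate v) from Matrix.mulVec_smul _ _ _, h,
    inv_smul_smul₀ (Int.cast_ne_zero.mpr det_mat3_ne_zero)]

/-- The certificate of the row reduction of `Ψ₂ - 8` and `Ψ₃`, modulo `3⁸`. -/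
lemma coef_congr :
    ∀ i j : Fin 8, (6561 : ℤ) ∣ (redN - (coefC * matC + coefB * mat3)) i j := by
  intro i
  fin_cases i <;> decide +kernel

lemma mat3_vecE : act mat3 (toQ vecE) = (729 : ℚ) • toQ vecG := by
  rw [act_toQ, show mat3.mulVec vecE = (729 : ℤ) • vecG by decide +kernel]
  ext i
  simp [toQ]

lemma matC_vecE : act matC (toQ vecE) = (729 : ℚ) • toQ vecH := by
  rw [act_toQ, show matC.mulVec vecE = (729 : ℤ) • vecH by decide +kernel]
  ext i
  simp [toQ]

/-! ### The vectors that both `Ψ₃` and `Ψ₂ - 8` send into the lattice -/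

/-- The lattice `{x | Ψ₃ x ∈ L, (Ψ₂ - 8) x ∈ L}` is contained in `L + ℤ_(3) · vecE / 3⁶`. -/
lemma mem_of_act_mem {x : Fin 8 → ℚ} (hB : act mat3 x ∈ latt8) (hC : act matC x ∈ latt8) :
    729 * x 7 ∈ ZLoc 3 ∧ x - x 7 • toQ vecE ∈ latt8 := by
  have h8 : (6561 : ℚ) • x ∈ latt8 := by
    refine mem_latt8.mpr fun i => ?_
    have h := mem_latt8.mp (det_smul_mem hC) i
    rw [det_matC] at h
    refine mem_of_unit_mul_mem (u := -566975522208854297968286105600000) (by norm_num) ?_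
    convert h using 1
    simp only [Pi.smul_apply, smul_eq_mul]
    push_cast
    ring
  -- The error term `3⁸ R` of the congruence is harmless, since `3⁸ x` lies in the lattice.
  choose R hR using coef_congr
  have hN : redN = (coefC * matC + coefB * mat3) + (6561 : ℤ) • Matrix.of R := by
    ext i j
    have := hR i j
    simp only [Matrix.sub_apply, Matrix.add_apply, Matrix.smul_apply, Matrix.of_apply,
      smul_eq_mul] at this ⊢
    linarith
  have hx : act redN x ∈ latt8 := by
    rw [hN, act_add, act_add, ← act_act, ← act_act, act_smul,
      show ((6561 : ℤ) : ℚ) • act (Matrix.of R) x = act (Matrix.of R) ((6561 : ℚ) • x) from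
        (Matrix.mulVec_smul _ _ _).symm]
    exact add_mem (add_mem (act_mem _ hC) (act_mem _ hB)) (act_mem _ h8)
  have hx' := mem_latt8.mp hx
  refine ⟨?_, mem_latt8.mpr fun i => ?_⟩
  · convert hx' 7 using 1
    simp [act_apply, redN, Fin.sum_univ_succ]
  · by_cases hi : i = 7
    · subst hi
      simp [toQ, vecE]
    · convert hx' i using 1
      fin_cases i <;>
        first
        | exact absurd rfl hi
        | simp [act_apply, redN, toQ, vecE, Fin.sum_univ_succ, sub_eq_add_neg, mul_comm]

lemma mem_im3 {v : Fin 8 → ℚ} : v ∈ im3 ↔ ∃ u ∈ latt8, act mat3 u = v := by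
  simp [im3, Submodule.mem_map, psiLin_three]

/-- The class of `vecG` modulo `Ψ₃ L` has order exactly `3⁶`. -/
lemma smul_vecG_mem_im3 (n : ℤ) : n • toQ vecG ∈ im3 ↔ (729 : ℤ) ∣ n := by
  have hG : n • toQ vecG = act mat3 ((n / 729 : ℚ) • toQ vecE) := by
    rw [show act mat3 ((n / 729 : ℚ) • toQ vecE) = (n / 729 : ℚ) • act mat3 (toQ vecE) from
      Matrix.mulVec_smul _ _ _, mat3_vecE, smul_smul, div_mul_cancel₀ _ (by norm_num),
      Int.cast_smul_eq_zsmul]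
  rw [mem_im3, hG]
  constructor
  · rintro ⟨u, hu, h⟩
    rw [act_mat3_injective h] at hu
    refine dvd_of_div_mem ?_
    simpa [toQ, vecE] using mem_latt8.mp hu 7
  · rintro ⟨k, rfl⟩
    refine ⟨_, ?_, rfl⟩
    refine mem_latt8.mpr fun i => ?_
    convert int_mem_ZLoc (k * vecE i) using 1
    simp [toQ]

/-- Every `v ∈ L` with `(Ψ₂ - 8) v ∈ Ψ₃ L` is congruent to an integral multiple of `vecG`
modulo `Ψ₃ L`. -/
lemma exists_smul_vecG {v : Fin 8 → ℚ} (hv : v ∈ latt8) (h : act matC v ∈ im3) :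
    ∃ n : ℤ, v - n • toQ vecG ∈ im3 := by
  obtain ⟨u, hu, huv⟩ := mem_im3.mp h
  obtain ⟨x, rfl⟩ := act_mat3_surjective v
  rw [act_matC_mat3] at huv
  obtain ⟨h7, hx⟩ := mem_of_act_mem hv (act_mat3_injective huv ▸ hu)
  obtain ⟨n, hn⟩ := exists_int_congr h7
  refine ⟨n, mem_im3.mpr ⟨x - (n / 729 : ℚ) • toQ vecE, ?_, ?_⟩⟩
  · refine mem_latt8.mpr fun i => ?_
    convert (ZLoc 3).add_mem (mem_latt8.mp hx i)
      ((ZLoc 3).mul_mem hn (mem_latt8.mp (toQ_mem vecE) i)) using 1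
    simp only [Pi.sub_apply, Pi.smul_apply, smul_eq_mul]
    ring
  · rw [show act mat3 (x - (n / 729 : ℚ) • toQ vecE)
      = act mat3 x - (n / 729 : ℚ) • act mat3 (toQ vecE) by
        simp only [act, Matrix.mulVec_sub, Matrix.mulVec_smul], mat3_vecE, smul_smul,
      div_mul_cancel₀ _ (by norm_num), Int.cast_smul_eq_zsmul]

lemma matC_vecG_mem : act matC (toQ vecG) ∈ im3 := by
  refine mem_im3.mpr ⟨toQ vecH, toQ_mem _, ?_⟩
  have h := act_matC_mat3 (toQ vecE)
  rw [mat3_vecE, matC_vecE] at h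
  simp only [act, Matrix.mulVec_smul] at h
  exact (smul_right_injective _ (by norm_num : (729 : ℚ) ≠ 0) h).symm

/-- Davis' Proposition 6.9: `Ψ₂` and `Ψ₃` preserve the lattice `ℤ_(3)⁸`, `Ψ₂` preserves
`Ψ₃(ℤ_(3)⁸)`, and the kernel of the endomorphism of `ℤ_(3)⁸/Ψ₃(ℤ_(3)⁸)` induced by
`Ψ₂ - 2³·id` is isomorphic to `ℤ/3⁶`.  Via Bousfield's theorem this kernel is the
Pontryagin dual of `v₁⁻¹π₅(E₈;3)`. -/
theorem stmt15 :
    latt8.map ((psiLin 2).restrictScalars (ZLoc 3)) ≤ latt8 ∧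
    latt8.map ((psiLin 3).restrictScalars (ZLoc 3)) ≤ latt8 ∧
    im3.map ((psiLin 2).restrictScalars (ZLoc 3)) ≤ im3 ∧
    ∃ φ : (↥latt8 ⧸ Submodule.comap latt8.subtype im3) →ₗ[ZLoc 3]
          (↥latt8 ⧸ Submodule.comap latt8.subtype im3),
      (∀ v w : ↥latt8,
        (w : Fin 8 → ℚ) = psiLin 2 (v : Fin 8 → ℚ) - (2 : ℚ) ^ 3 • (v : Fin 8 → ℚ) →
        φ (Submodule.Quotient.mk v) = Submodule.Quotient.mk w) ∧
      Nonempty (↥(LinearMap.ker φ) ≃+ ZMod (3 ^ 6)) := by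
  have h2 : ∀ x ∈ latt8, psiLin 2 x ∈ latt8 := fun x hx => psiLin_two x ▸ act_mem _ hx
  have hC : ∀ x ∈ latt8, ((psiLin 2 - (2 : ℚ) ^ 3 • LinearMap.id).restrictScalars (ZLoc 3)) x
      ∈ latt8 := fun x hx => by
    have := act_mem matC hx
    rw [← psi_sub_eight] at this
    exact this
  have hCim : ∀ x ∈ im3, act matC x ∈ im3 := fun x hx => by
    obtain ⟨u, hu, rfl⟩ := mem_im3.mp hx
    exact mem_im3.mpr ⟨act matC u, act_mem _ hu, (act_matC_mat3 u).symm⟩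
  refine ⟨?_, ?_, ?_, ?_⟩
  · rintro _ ⟨x, hx, rfl⟩
    exact h2 x hx
  · rintro _ ⟨x, hx, rfl⟩
    exact (psiLin_three x).symm ▸ act_mem mat3 hx
  · rintro _ ⟨x, hx, rfl⟩
    obtain ⟨u, hu, rfl⟩ := mem_im3.mp hx
    refine mem_im3.mpr ⟨act mat2 u, act_mem _ hu, ?_⟩
    change _ = psiLin 2 (act mat3 u)
    rw [psiLin_two, act_act, act_act, mat_comm]
  · set f : latt8 →ₗ[ZLoc 3] latt8 :=
      ((psiLin 2 - (2 : ℚ) ^ 3 • LinearMap.id).restrictScalars (ZLoc 3)).restrict hC with hf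
    have hfv : ∀ v : latt8, (f v : Fin 8 → ℚ) = act matC v := fun v => psi_sub_eight v
    set P := Submodule.comap latt8.subtype im3 with hP
    have hPf : P ≤ P.comap f := fun v hv => by
      change (f v : Fin 8 → ℚ) ∈ im3
      rw [hfv]
      exact hCim _ hv
    have hker : ∀ v : latt8, P.mkQ v ∈ LinearMap.ker (P.mapQ P f hPf) ↔
        act matC v ∈ im3 := fun v => by
      rw [LinearMap.mem_ker, Submodule.mkQ_apply, Submodule.mapQ_apply,
        Submodule.Quotient.mk_eq_zero, ← hfv]
      rfl
    refine ⟨P.mapQ P f hPf, ?_, ?_⟩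
    · intro v w hw
      rw [Submodule.mapQ_apply]
      congr 1
      exact Subtype.ext (hw.trans (psi_sub_eight v) |>.trans (hfv v).symm).symm
    · let G : latt8 := ⟨toQ vecG, toQ_mem _⟩
      let γ : LinearMap.ker (P.mapQ P f hPf) := ⟨P.mkQ G, (hker G).mpr matC_vecG_mem⟩
      have hsurj : Function.Surjective (zmultiplesHom _ γ) := by
        rintro ⟨q, hq⟩
        obtain ⟨v, rfl⟩ := P.mkQ_surjective q
        obtain ⟨n, hn⟩ := exists_smul_vecG v.2 ((hker v).mp hq)
        refine ⟨n, Subtype.ext ?_⟩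
        have : P.mkQ (v - n • G) = 0 := (Submodule.Quotient.mk_eq_zero P).mpr hn
        rw [map_sub, map_zsmul, sub_eq_zero] at this
        exact this.symm
      have hkern : (zmultiplesHom _ γ).ker = AddSubgroup.zmultiples ((729 : ℕ) : ℤ) := by
        ext n
        rw [AddMonoidHom.mem_ker, Int.mem_zmultiples_iff]
        refine Iff.trans ?_ (smul_vecG_mem_im3 n)
        rw [zmultiplesHom_apply, Subtype.ext_iff]
        change n • P.mkQ G = 0 ↔ _
        rw [← map_zsmul]
        exact Submodule.Quotient.mk_eq_zero P
      exact ⟨(QuotientAddGroup.quotientKerEquivOfSurjective _ hsurj).symm.trans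
        ((QuotientAddGroup.quotientAddEquivOfEq hkern).trans
          (Int.quotientZMultiplesNatEquivZMod 729))⟩

end
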